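/- Write R^{(q)}(u) for the Bazhanov–Jimbo R-matrix with deformation parameter q, and for X ∈ End(ℂ^N⊗ℂ^N) let (w⊗w)(X) = (J⊗J) X^T (J⊗J) with J = Σ_i E_{i,N−i+1} (i.e., the antidiagonal transposition applied in both tensor factors). Then for every u ∈ ℂ^× with u ≠ q^{±2}, one has (w⊗w)(R^{(q^{-1})}(u^{-1})) = P R^{(q)}(u) P. -/

import Mathlib

/-!
Since `P² = 1`, conjugating `R^{(q)}(u)` by `P` swaps the roles of its two summands and gives
`f_q(u) P R_q P + f_{q⁻¹}(u⁻¹) R_{q⁻¹}`, which is literally `R^{(q⁻¹)}(u⁻¹)`. It remains to see that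
`w ⊗ w` fixes this matrix. It fixes the constant matrix `R_q` for every `q` (`Rconst_rev`), because
the transposition and the order-reversing relabelling `i ↦ N + 1 - i` each flip the condition
`i < j`; and it commutes with conjugation by `P`, which only exchanges the two tensor factors.
Conjugations by `P` and by `J ⊗ J` are treated as relabellings of the matrix indices (`Pconj`,
`ww_eq`), so the identity can be compared entrywise.
-/

open Matrix
open scoped Kronecker

noncomputable section

/-- 1-based matrix unit `E_{a b}` in the `N × N` complex matrices. -/
def Em (N : ℕ) (a b : ℕ) : Matrix (Fin N) (Fin N) ℂ :=
  Matrix.of fun i j => if (i : ℕ) + 1 = a ∧ (j : ℕ) + 1 = b then 1 else 0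

/-- The flip (permutation) operator `P = Σ_{i,j} E_{ij} ⊗ E_{ji}`. -/
def Pmat (N : ℕ) : Matrix (Fin N × Fin N) (Fin N × Fin N) ℂ :=
  ∑ i ∈ Finset.Icc 1 N, ∑ j ∈ Finset.Icc 1 N, Em N i j ⊗ₖ Em N j i

/-- The constant R-matrix `R_q`. -/
def Rconst (N : ℕ) (q : ℂ) : Matrix (Fin N × Fin N) (Fin N × Fin N) ℂ :=
  (∑ i ∈ Finset.Icc 1 N, ∑ j ∈ Finset.Icc 1 N,
      (if i = j then q else 1) • (Em N i i ⊗ₖ Em N j j))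
    + ∑ i ∈ Finset.Icc 1 N, ∑ j ∈ Finset.Icc 1 N,
        (if i < j then q - q⁻¹ else 0) • (Em N i j ⊗ₖ Em N j i)

/-- `f_q(u) = 1/(q - q⁻¹ u)`. -/
def fBJ (q u : ℂ) : ℂ := (q - q⁻¹ * u)⁻¹

/-- The Bazhanov–Jimbo R-matrix `R(u) = f_q(u) R_q + f_{q⁻¹}(u⁻¹) P R_{q⁻¹} P`. -/
def RBJ (N : ℕ) (q u : ℂ) : Matrix (Fin N × Fin N) (Fin N × Fin N) ℂ :=
  fBJ q u • Rconst N q + fBJ q⁻¹ u⁻¹ • (Pmat N * Rconst N q⁻¹ * Pmat N)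

/-- `X1 = X ⊗ I`. -/
def M1 (N : ℕ) (X : Matrix (Fin N) (Fin N) ℂ) : Matrix (Fin N × Fin N) (Fin N × Fin N) ℂ :=
  X ⊗ₖ (1 : Matrix (Fin N) (Fin N) ℂ)

/-- `X2 = I ⊗ X`. -/
def M2 (N : ℕ) (X : Matrix (Fin N) (Fin N) ℂ) : Matrix (Fin N × Fin N) (Fin N × Fin N) ℂ :=
  (1 : Matrix (Fin N) (Fin N) ℂ) ⊗ₖ X

/-- `R21(u) = P R(u) P`. -/
def R21 (N : ℕ) (q u : ℂ) : Matrix (Fin N × Fin N) (Fin N × Fin N) ℂ :=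
  Pmat N * RBJ N q u * Pmat N

/-- Transposition in the first tensor factor. -/
def t1 (N : ℕ) (X : Matrix (Fin N × Fin N) (Fin N × Fin N) ℂ) :
    Matrix (Fin N × Fin N) (Fin N × Fin N) ℂ :=
  Matrix.of fun p r => X (r.1, p.2) (p.1, r.2)

/-- The charge conjugation matrix `C = Σ_i (-q)^i E_{ī i}` where `ī = N+1-i`. -/
def Cmat (N : ℕ) (q : ℂ) : Matrix (Fin N) (Fin N) ℂ :=
  ∑ i ∈ Finset.Icc 1 N, (-q) ^ i • Em N (N + 1 - i) i

/-- The C-conjugated R-matrix `R^∨(u) = C2⁻¹ R^{t1}(q̃² u⁻¹) C2` with `q̃ = s^N`. -/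
def Rvee (N : ℕ) (q s u : ℂ) : Matrix (Fin N × Fin N) (Fin N × Fin N) ℂ :=
  (M2 N (Cmat N q))⁻¹ * t1 N (RBJ N q ((s ^ N) ^ 2 * u⁻¹)) * M2 N (Cmat N q)

/-- `R^∨21(u) = P R^∨(u) P`. -/
def Rvee21 (N : ℕ) (q s u : ℂ) : Matrix (Fin N × Fin N) (Fin N × Fin N) ℂ :=
  Pmat N * Rvee N q s u * Pmat N

/-- The untwisted reflection equation at spectral parameters `(u, v)`. -/
def REeq (N : ℕ) (q : ℂ) (K : ℂ → Matrix (Fin N) (Fin N) ℂ) (u v : ℂ) : Prop :=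
  R21 N q (u / v) * M1 N (K u) * RBJ N q (u * v) * M2 N (K v)
    = M2 N (K v) * R21 N q (u * v) * M1 N (K u) * RBJ N q (u / v)

/-- `K` satisfies the untwisted reflection equation (RE) for all `u, v`
for which all factors are defined. -/
def IsRESol (N : ℕ) (q : ℂ) (K : ℂ → Matrix (Fin N) (Fin N) ℂ) : Prop :=
  ∀ u v : ℂ, u ≠ 0 → v ≠ 0 → u / v ≠ q ^ 2 → u / v ≠ q⁻¹ ^ 2 →
    u * v ≠ q ^ 2 → u * v ≠ q⁻¹ ^ 2 → REeq N q K u v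

/-- The cross-conjugated twisted reflection equation at `(u, v)`. -/
def CtREeq (N : ℕ) (q s : ℂ) (K : ℂ → Matrix (Fin N) (Fin N) ℂ) (u v : ℂ) : Prop :=
  R21 N q (u / v) * M1 N (K u) * Rvee N q s (u * v) * M2 N (K v)
    = M2 N (K v) * Rvee21 N q s (u * v) * M1 N (K u) * RBJ N q (u / v)

/-- `K` satisfies the cross-conjugated twisted reflection equation (CtRE) for all
`u, v` for which all factors are defined. -/
def IsCtRESol (N : ℕ) (q s : ℂ) (K : ℂ → Matrix (Fin N) (Fin N) ℂ) : Prop :=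
  ∀ u v : ℂ, u ≠ 0 → v ≠ 0 → u / v ≠ q ^ 2 → u / v ≠ q⁻¹ ^ 2 →
    (s ^ N) ^ 2 * (u * v)⁻¹ ≠ q ^ 2 → (s ^ N) ^ 2 * (u * v)⁻¹ ≠ q⁻¹ ^ 2 →
    CtREeq N q s K u v

/-- Transposition across the antidiagonal: `(M^w)_{ij} = M_{N+1-j, N+1-i}`. -/
def wT (N : ℕ) (M : Matrix (Fin N) (Fin N) ℂ) : Matrix (Fin N) (Fin N) ℂ :=
  Matrix.of fun i j => M (Fin.rev j) (Fin.rev i)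

/-- The antidiagonal permutation matrix `J = Σ_i E_{i, N+1-i}`. -/
def Jw (N : ℕ) : Matrix (Fin N) (Fin N) ℂ :=
  ∑ i ∈ Finset.Icc 1 N, Em N i (N + 1 - i)

/-- `(w ⊗ w)(X) = (J ⊗ J) Xᵀ (J ⊗ J)`: the antidiagonal transposition applied in
both tensor factors. -/
def ww (N : ℕ) (X : Matrix (Fin N × Fin N) (Fin N × Fin N) ℂ) :
    Matrix (Fin N × Fin N) (Fin N × Fin N) ℂ :=
  (Jw N ⊗ₖ Jw N) * Xᵀ * (Jw N ⊗ₖ Jw N)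

/-- Entries of a linear combination of the tensors `E_{ij} ⊗ E_{ji}`. -/
lemma sum_flip_apply (N : ℕ) (g : ℕ → ℕ → ℂ) (a b c d : Fin N) :
    (∑ i ∈ Finset.Icc 1 N, ∑ j ∈ Finset.Icc 1 N, g i j • (Em N i j ⊗ₖ Em N j i)) (a, b) (c, d)
      = if a = d ∧ b = c then g (a + 1) (c + 1) else 0 := by
  have ha := a.isLt
  have hc := c.isLt
  simp only [Matrix.sum_apply, Matrix.smul_apply, kroneckerMap_apply, Em, of_apply, smul_eq_mul]
  rw [Finset.sum_eq_single ((a : ℕ) + 1)]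
  · rw [Finset.sum_eq_single ((c : ℕ) + 1)]
    · by_cases h : a = d ∧ b = c
      · obtain ⟨rfl, rfl⟩ := h
        simp
      · have h' : ¬ ((b : ℕ) = c ∧ (d : ℕ) = a) := fun k =>
          h ⟨Fin.ext k.2.symm, Fin.ext k.1⟩
        simp [h, h']
    · intro j _ hj
      simp [hj.symm]
    · intro h
      exact absurd (Finset.mem_Icc.mpr ⟨by omega, by omega⟩) h
  · intro i _ hi
    simp [hi.symm]
  · intro h
    exact absurd (Finset.mem_Icc.mpr ⟨by omega, by omega⟩) h

/-- Entries of a linear combination of the tensors `E_{ii} ⊗ E_{jj}`. -/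
lemma sum_diag_apply (N : ℕ) (g : ℕ → ℕ → ℂ) (a b c d : Fin N) :
    (∑ i ∈ Finset.Icc 1 N, ∑ j ∈ Finset.Icc 1 N, g i j • (Em N i i ⊗ₖ Em N j j)) (a, b) (c, d)
      = if a = c ∧ b = d then g (a + 1) (b + 1) else 0 := by
  have ha := a.isLt
  have hb := b.isLt
  simp only [Matrix.sum_apply, Matrix.smul_apply, kroneckerMap_apply, Em, of_apply, smul_eq_mul]
  rw [Finset.sum_eq_single ((a : ℕ) + 1)]
  · rw [Finset.sum_eq_single ((b : ℕ) + 1)]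
    · by_cases h : a = c ∧ b = d
      · obtain ⟨rfl, rfl⟩ := h
        simp
      · have h' : ¬ ((c : ℕ) = a ∧ (d : ℕ) = b) := fun k =>
          h ⟨Fin.ext k.1.symm, Fin.ext k.2.symm⟩
        rw [if_neg h]
        by_cases h1 : (c : ℕ) = a
        · have h2 : ¬ (d : ℕ) = b := fun k => h' ⟨h1, k⟩
          simp [h2]
        · simp [h1]
    · intro j _ hj
      simp [hj.symm]
    · intro h
      exact absurd (Finset.mem_Icc.mpr ⟨by omega, by omega⟩) h
  · intro i _ hi
    simp [hi.symm]
  · intro h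
    exact absurd (Finset.mem_Icc.mpr ⟨by omega, by omega⟩) h

lemma Rconst_apply (N : ℕ) (q : ℂ) (a b c d : Fin N) :
    Rconst N q (a, b) (c, d)
      = (if a = c ∧ b = d then (if a = b then q else 1) else 0)
        + (if a = d ∧ b = c then (if a < c then q - q⁻¹ else 0) else 0) := by
  unfold Rconst
  rw [Matrix.add_apply, sum_diag_apply N (fun i j => if i = j then q else 1),
    sum_flip_apply N (fun i j => if i < j then q - q⁻¹ else 0)]
  simp [Fin.ext_iff]

lemma Pmat_eq (N : ℕ) :
    Pmat N = (1 : Matrix (Fin N × Fin N) (Fin N × Fin N) ℂ).submatrix Prod.swap id := by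
  ext ⟨a, b⟩ ⟨c, d⟩
  have h := sum_flip_apply N (fun _ _ => 1) a b c d
  simp only [one_smul] at h
  rw [Pmat, h]
  simp [Matrix.one_apply, and_comm]

lemma Jw_apply (N : ℕ) (a b : Fin N) : Jw N a b = if a.rev = b then 1 else 0 := by
  have ha := a.isLt
  have hb := b.isLt
  simp only [Jw, Matrix.sum_apply, Em, of_apply]
  rw [Finset.sum_eq_single ((a : ℕ) + 1)]
  · have h : ((a : ℕ) + 1 = (a : ℕ) + 1 ∧ (b : ℕ) + 1 = N + 1 - ((a : ℕ) + 1)) ↔ a.rev = b := by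
      rw [Fin.ext_iff, Fin.val_rev]
      omega
    exact if_congr h rfl rfl
  · intro i _ hi
    simp [hi.symm]
  · intro h
    exact absurd (Finset.mem_Icc.mpr ⟨by omega, by omega⟩) h

lemma JJ_eq (N : ℕ) :
    Jw N ⊗ₖ Jw N = (1 : Matrix (Fin N × Fin N) (Fin N × Fin N) ℂ).submatrix
      (Prod.map Fin.rev Fin.rev) id := by
  ext ⟨a, b⟩ ⟨c, d⟩
  by_cases h : a.rev = c <;> simp [Jw_apply, Matrix.one_apply, h]

/-- Conjugation by the permutation matrix of an involution relabels rows and columns. -/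
lemma conj_perm {n : Type*} [Fintype n] [DecidableEq n] (e : n → n)
    (he : Function.Involutive e) (X : Matrix n n ℂ) :
    (1 : Matrix n n ℂ).submatrix e id * X * (1 : Matrix n n ℂ).submatrix e id
      = X.submatrix e e := by
  ext i j
  have h : ∀ x, (e x = j) ↔ (x = e j) := fun x => he.eq_iff
  simp [Matrix.mul_apply, Matrix.one_apply, h]

lemma Pconj (N : ℕ) (X : Matrix (Fin N × Fin N) (Fin N × Fin N) ℂ) :
    Pmat N * X * Pmat N = X.submatrix Prod.swap Prod.swap := by
  rw [Pmat_eq, conj_perm _ Prod.swap_swap]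

lemma ww_eq (N : ℕ) (X : Matrix (Fin N × Fin N) (Fin N × Fin N) ℂ) :
    ww N X = Xᵀ.submatrix (Prod.map Fin.rev Fin.rev) (Prod.map Fin.rev Fin.rev) := by
  rw [ww, JJ_eq, conj_perm _ (fun ⟨a, b⟩ => by simp)]

/-- `R_q` is fixed by `w ⊗ w`: the term `E_{ij} ⊗ E_{ji}` is sent to
`E_{j̄ ī} ⊗ E_{ī j̄}` with `ī = N + 1 - i`, and `j̄ < ī` exactly when `i < j`. -/
lemma Rconst_rev (N : ℕ) (q : ℂ) (a b c d : Fin N) :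
    Rconst N q (c.rev, d.rev) (a.rev, b.rev) = Rconst N q (a, b) (c, d) := by
  rw [Rconst_apply, Rconst_apply]
  simp only [Fin.rev_inj, Fin.rev_lt_rev]
  congr 1
  · by_cases h : a = c ∧ b = d
    · obtain ⟨rfl, rfl⟩ := h
      rfl
    · rw [if_neg h, if_neg (fun k => h ⟨k.1.symm, k.2.symm⟩)]
  · by_cases h : a = d ∧ b = c
    · obtain ⟨rfl, rfl⟩ := h
      simp
    · rw [if_neg h, if_neg (fun k => h ⟨k.2.symm, k.1.symm⟩)]

/-- `(w⊗w)(R^{(q⁻¹)}(u⁻¹)) = P R^{(q)}(u) P`. -/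
theorem statement9 (N : ℕ) (hN : 2 ≤ N) (q : ℂ) (hq : q ≠ 0)
    (u : ℂ) (hu0 : u ≠ 0) (hu1 : u ≠ q ^ 2) (hu2 : u ≠ q⁻¹ ^ 2) :
    ww N (RBJ N q⁻¹ u⁻¹) = Pmat N * RBJ N q u * Pmat N := by
  rw [ww_eq, Pconj]
  ext ⟨a, b⟩ ⟨c, d⟩
  simp only [RBJ, Pconj, inv_inv, submatrix_apply, transpose_apply, Matrix.add_apply,
    Matrix.smul_apply, Prod.map_apply, Prod.swap_prod_mk, Rconst_rev]
  exact add_comm _ _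

end
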